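/- Consider the setting of the linear problem: q_e : 𝕋_L → ℝ smooth and positive, ω₀ > 0, and smooth Q, F, G on 𝕋_L × [0,∞) satisfying ∂_s Q − ω₀ q_e(s) ∂_ψ² Q = F + ∂_ψ² G, with Q(s,ψ) → 0 as ψ → ∞. Define the zero mode Q^{(=0)}(ψ) := (1/L) ∫₀^L Q(s,ψ) ds and the nonzero-mode part Q^{(≠0)} := Q − Q^{(=0)}, and similarly G^{(=0)}. Assume the decay conditions ∫₀^L q_e(s) Q(s,ψ) ds → 0 and ∂_ψ ∫₀^L q_e(s) Q(s,ψ) ds → 0 as ψ → ∞, and ∫₀^L G(s,ψ) ds → 0 as ψ → ∞. Then for every integer m ≥ 0 there is a constant C (depending on m, L, ω₀, q_e) such that ‖⟨ψ⟩^m Q^{(=0)}‖²_{L²(ℝ₊)} ≤ C ( ‖⟨ψ⟩^m Q^{(≠0)}‖²_{L²(𝕋_L×ℝ₊)} + ‖⟨ψ⟩^{m+4} F‖²_{L²(𝕋_L×ℝ₊)} + ‖⟨ψ⟩^m G‖²_{L²(𝕋_L×ℝ₊)} ), provided the right-hand side is finite. -/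

import Mathlib

open MeasureTheory Set Function Filter

/-- `k`-th partial derivative in the tangential variable `s` of a function on
`𝕋_L × [0,∞)` (represented as a curried function `ℝ → ℝ → ℝ`). -/
noncomputable def dS (k : ℕ) (h : ℝ → ℝ → ℝ) : ℝ → ℝ → ℝ :=
  fun s ψ => iteratedDeriv k (fun s' => h s' ψ) s

/-- `j`-th partial derivative in the normal (von Mises) variable `ψ`. -/
noncomputable def dPsi (j : ℕ) (h : ℝ → ℝ → ℝ) : ℝ → ℝ → ℝ :=
  fun s ψ => iteratedDeriv j (fun ψ' => h s ψ') ψ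

/-- Squared `L²` norm over `𝕋_L × ℝ₊` (fundamental domain `(0,L] × (0,∞)`). -/
noncomputable def L2sq (L : ℝ) (h : ℝ → ℝ → ℝ) : ℝ :=
  ∫ p in Ioc (0:ℝ) L ×ˢ Ioi (0:ℝ), (h p.1 p.2) ^ 2

/-- Square-integrability over `𝕋_L × ℝ₊`. -/
def FiniteL2 (L : ℝ) (h : ℝ → ℝ → ℝ) : Prop :=
  IntegrableOn (fun p : ℝ × ℝ => (h p.1 p.2) ^ 2) (Ioc (0:ℝ) L ×ˢ Ioi (0:ℝ))

/-- The weight `⟨ψ⟩^m h`. -/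
noncomputable def wt (m : ℕ) (h : ℝ → ℝ → ℝ) : ℝ → ℝ → ℝ :=
  fun s ψ => (1 + ψ) ^ m * h s ψ

/-- Squared `X_{k,m}` norm:
`‖h‖²_{X_{k,m}} = Σ_{k'≤k} Σ_{m'≤m} (‖⟨ψ⟩^{m'}∂_s^{k'}h‖² + ‖⟨ψ⟩^{m'}∂_s^{k'+1}h‖²
+ ‖⟨ψ⟩^{m'}∂_ψ∂_s^{k'}h‖² + ‖⟨ψ⟩^{m'}∂_ψ²∂_s^{k'}h‖²)`. -/
noncomputable def XnormSq (L : ℝ) (k m : ℕ) (h : ℝ → ℝ → ℝ) : ℝ :=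
  ∑ k' ∈ Finset.range (k+1), ∑ m' ∈ Finset.range (m+1),
    (L2sq L (wt m' (dS k' h)) + L2sq L (wt m' (dS (k'+1) h))
      + L2sq L (wt m' (dPsi 1 (dS k' h))) + L2sq L (wt m' (dPsi 2 (dS k' h))))

/-- The `X_{k,m}` norm. -/
noncomputable def Xnorm (L : ℝ) (k m : ℕ) (h : ℝ → ℝ → ℝ) : ℝ :=
  Real.sqrt (XnormSq L k m h)

/-- Membership in the space `X_{k,m}`: all the defining integrands are integrable. -/
def XFinite (L : ℝ) (k m : ℕ) (h : ℝ → ℝ → ℝ) : Prop :=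
  ∀ k' ≤ k, ∀ m' ≤ m,
    FiniteL2 L (wt m' (dS k' h)) ∧ FiniteL2 L (wt m' (dS (k'+1) h))
      ∧ FiniteL2 L (wt m' (dPsi 1 (dS k' h))) ∧ FiniteL2 L (wt m' (dPsi 2 (dS k' h)))

/-- Joint smoothness of a curried function of two real variables. -/
def Smooth2 (h : ℝ → ℝ → ℝ) : Prop :=
  ContDiff ℝ (⊤ : ℕ∞) (fun p : ℝ × ℝ => h p.1 p.2)

/-- Periodicity in the first (tangential) variable. -/
def PeriodicS (L : ℝ) (h : ℝ → ℝ → ℝ) : Prop :=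
  ∀ ψ : ℝ, Function.Periodic (fun s => h s ψ) L

/-- Squared `H^n` norm of a function on `𝕋_L`. -/
noncomputable def HnormSq (L : ℝ) (n : ℕ) (b : ℝ → ℝ) : ℝ :=
  ∑ j ∈ Finset.range (n+1), ∫ s in (0:ℝ)..L, (iteratedDeriv j b s) ^ 2

/-! Integrating the equation in `s` kills `∂_s Q` by periodicity, so the flux `H = ∫ (a Q + G) ds`,
with `a = ω₀ q_e`, satisfies `H'' = -∫ F ds`. Both `H` and `H'` vanish at `ψ = ∞`: since `H''` is
integrable, `H'` has a limit, which must be `0` because `H → 0`. Each integration from `∞` costs two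
powers of `⟨ψ⟩`, and two integrations give the four powers on `F`. Since
`(∫ a ds) Q^{(=0)} = H - ∫ G ds - ∫ a Q^{(≠0)} ds`, the Cauchy-Schwarz inequality in `s` bounds the
zero mode. -/

/-- The squared norm `‖⟨ψ⟩^k u‖²` in `L²(ℝ₊)`. -/
noncomputable def weightedL2sq (k : ℕ) (u : ℝ → ℝ) : ℝ :=
  ∫ ψ in Ioi (0 : ℝ), ((1 + ψ) ^ k * u ψ) ^ 2

/-- `⟨ψ⟩^k u` belongs to `L²(ℝ₊)`, the condition under which `weightedL2sq k u` is not a junk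
value. -/
def FiniteWeightedL2 (k : ℕ) (u : ℝ → ℝ) : Prop :=
  MemLp (fun ψ => (1 + ψ) ^ k * u ψ) 2 (volume.restrict (Ioi 0))

/-- The zero mode `h^{(=0)}(ψ)`, the mean of `h(·, ψ)` over one period. -/
noncomputable def zeroMode (L : ℝ) (h : ℝ → ℝ → ℝ) (ψ : ℝ) : ℝ :=
  (1 / L) * ∫ s in (0 : ℝ)..L, h s ψ

/-- The integral of `a ∂_ψ^j Q + ∂_ψ^j G` over one period. It stands for the `j`-th derivative of
the total flux `∫ (a Q + G) ds`; the derivatives are taken under the integral sign. -/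
noncomputable def fluxIntegral (L : ℝ) (a : ℝ → ℝ) (Q G : ℝ → ℝ → ℝ) (j : ℕ) (ψ : ℝ) : ℝ :=
  ∫ s in (0 : ℝ)..L, (a s * dPsi j Q s ψ + dPsi j G s ψ)

section General

theorem sq_integral_mul_le {α : Type*} [MeasurableSpace α] {μ : Measure α} {f g : α → ℝ}
    (hf : MemLp f 2 μ) (hg : MemLp g 2 μ) :
    (∫ x, f x * g x ∂μ) ^ 2 ≤ (∫ x, f x ^ 2 ∂μ) * ∫ x, g x ^ 2 ∂μ := by
  have inner_toLp {u v : α → ℝ} (hu : MemLp u 2 μ) (hv : MemLp v 2 μ) :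
      inner ℝ (hu.toLp u) (hv.toLp v) = ∫ x, u x * v x ∂μ := by
    rw [L2.inner_def]
    refine integral_congr_ae ?_
    filter_upwards [hu.coeFn_toLp, hv.coeFn_toLp] with x hux hvx
    rw [hux, hvx]
    exact mul_comm (v x) (u x)
  simpa only [inner_toLp, ← sq] using real_inner_mul_inner_self_le (hf.toLp f) (hg.toLp g)

theorem hasDerivAt_intervalIntegral_of_continuous {E : Type*} [NormedAddCommGroup E]
    [NormedSpace ℝ E] {h h' : ℝ → ℝ → E} (a b ψ : ℝ)
    (hh : ∀ ψ, Continuous fun s => h s ψ) (hh' : Continuous (uncurry h'))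
    (hderiv : ∀ s ψ, HasDerivAt (h s) (h' s ψ) ψ) :
    HasDerivAt (fun ψ => ∫ s in a..b, h s ψ) (∫ s in a..b, h' s ψ) ψ := by
  have hcompact : IsCompact (uIcc a b ×ˢ Metric.closedBall ψ 1) :=
    isCompact_uIcc.prod (isCompact_closedBall ψ 1)
  obtain ⟨C, hC⟩ := hcompact.exists_bound_of_continuousOn hh'.continuousOn
  refine (intervalIntegral.hasDerivAt_integral_of_dominated_loc_of_deriv_le
    (F := fun ψ s => h s ψ) (F' := fun ψ s => h' s ψ) (bound := fun _ => C)
    (Metric.closedBall_mem_nhds ψ one_pos) ?_ ((hh ψ).intervalIntegrable a b) ?_ ?_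
    intervalIntegrable_const ?_).2
  · exact .of_forall fun ψ => (hh ψ).aestronglyMeasurable
  · exact Continuous.aestronglyMeasurable (by fun_prop)
  · exact .of_forall fun s hs ψ hψ => hC (s, ψ) ⟨uIoc_subset_uIcc hs, hψ⟩
  · exact .of_forall fun s _ ψ _ => hderiv s ψ

theorem eq_zero_of_tendsto_of_tendsto_deriv {u u' : ℝ → ℝ} {a c l : ℝ}
    (hderiv : ∀ x > a, HasDerivAt u (u' x) x) (hu : Tendsto u atTop (nhds c))
    (hu' : Tendsto u' atTop (nhds l)) : l = 0 := by
  have mean_value : ∀ x > a, ∃ y > x, u' y = u (x + 1) - u x := by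
    intro x hx
    obtain ⟨y, hy, hslope⟩ := exists_hasDerivAt_eq_slope u u' (lt_add_one x)
      (fun t ht => (hderiv t (hx.trans_le ht.1)).continuousAt.continuousWithinAt)
      (fun t ht => hderiv t (hx.trans ht.1))
    exact ⟨y, hy.1, by simpa using hslope⟩
  choose! y hyx hslope using mean_value
  have hy : Tendsto y atTop atTop :=
    tendsto_atTop_mono' atTop ((eventually_gt_atTop a).mono fun x hx => (hyx x hx).le) tendsto_id
  have hdiff : Tendsto (fun x => u (x + 1) - u x) atTop (nhds 0) := by
    simpa using (hu.comp (tendsto_atTop_add_const_right atTop 1 tendsto_id)).sub hu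
  refine tendsto_nhds_unique ((hu'.comp hy).congr' ?_) hdiff
  exact (eventually_gt_atTop a).mono hslope

theorem hasDerivAt_neg_inv_one_add {x : ℝ} (hx : 0 ≤ x) :
    HasDerivAt (fun t : ℝ => -(1 + t)⁻¹) (((1 + x) ^ 2)⁻¹) x := by
  have h := (((hasDerivAt_id x).const_add 1).inv (add_pos_of_pos_of_nonneg one_pos hx).ne').neg
  simpa [neg_div] using! h

theorem tendsto_neg_inv_one_add_atTop :
    Tendsto (fun t : ℝ => -(1 + t)⁻¹) atTop (nhds 0) := by
  simpa using (tendsto_atTop_add_const_left atTop (1 : ℝ) tendsto_id).inv_tendsto_atTop.neg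

theorem integrableOn_inv_one_add_sq_Ioi :
    IntegrableOn (fun t : ℝ => ((1 + t) ^ 2)⁻¹) (Ioi 0) :=
  integrableOn_Ioi_deriv_of_nonneg' (fun _ => hasDerivAt_neg_inv_one_add)
    (fun _ _ => by positivity) tendsto_neg_inv_one_add_atTop

theorem integral_inv_one_add_sq_Ioi : ∫ t in Ioi (0 : ℝ), ((1 + t) ^ 2)⁻¹ = 1 := by
  simpa using integral_Ioi_of_hasDerivAt_of_tendsto' (fun _ => hasDerivAt_neg_inv_one_add)
    integrableOn_inv_one_add_sq_Ioi tendsto_neg_inv_one_add_atTop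

theorem memLp_inv_one_add_Ioi :
    MemLp (fun t : ℝ => (1 + t)⁻¹) 2 (volume.restrict (Ioi 0)) := by
  rw [memLp_two_iff_integrable_sq (by fun_prop)]
  simpa only [inv_pow] using! integrableOn_inv_one_add_sq_Ioi

end General

section WeightedHalfLine

variable {k : ℕ} {u v w u' u'' : ℝ → ℝ}

theorem weightedL2sq_const_mul (c : ℝ) (k : ℕ) (u : ℝ → ℝ) :
    weightedL2sq k (fun ψ => c * u ψ) = c ^ 2 * weightedL2sq k u := by
  simp only [weightedL2sq, ← integral_const_mul]
  congr! 2
  ring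

theorem FiniteWeightedL2.const_mul (hu : FiniteWeightedL2 k u) (c : ℝ) :
    FiniteWeightedL2 k fun ψ => c * u ψ := by
  simpa only [FiniteWeightedL2, mul_left_comm] using! MemLp.const_mul hu c

theorem FiniteWeightedL2.sub (hu : FiniteWeightedL2 k u) (hv : FiniteWeightedL2 k v) :
    FiniteWeightedL2 k fun ψ => u ψ - v ψ := by
  simpa only [FiniteWeightedL2, mul_sub] using! MemLp.sub hu hv

theorem weightedL2sq_neg (k : ℕ) (u : ℝ → ℝ) :
    weightedL2sq k (fun ψ => -u ψ) = weightedL2sq k u := by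
  simpa using weightedL2sq_const_mul (-1) k u

theorem FiniteWeightedL2.neg (hu : FiniteWeightedL2 k u) :
    FiniteWeightedL2 k fun ψ => -u ψ := by
  simpa using hu.const_mul (-1)

theorem weightedL2sq_sub_sub_le (hu : FiniteWeightedL2 k u) (hv : FiniteWeightedL2 k v)
    (hw : FiniteWeightedL2 k w) :
    weightedL2sq k (fun ψ => u ψ - v ψ - w ψ)
      ≤ 3 * (weightedL2sq k u + weightedL2sq k v + weightedL2sq k w) := by
  have hu2 := hu.integrable_sq
  have hv2 := hv.integrable_sq
  have hw2 := hw.integrable_sq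
  have huv2 : Integrable (fun ψ => ((1 + ψ) ^ k * u ψ) ^ 2 + ((1 + ψ) ^ k * v ψ) ^ 2)
      (volume.restrict (Ioi 0)) := hu2.add hv2
  unfold weightedL2sq
  rw [← integral_add hu2 hv2, ← integral_add huv2 hw2, ← integral_const_mul]
  refine integral_mono ((hu.sub hv).sub hw).integrable_sq ((huv2.add hw2).const_mul 3)
    fun ψ => ?_
  have sq_sub_sub_le (x y z : ℝ) : (x - y - z) ^ 2 ≤ 3 * (x ^ 2 + y ^ 2 + z ^ 2) := by
    linarith [sq_nonneg (x + y), sq_nonneg (x + z), sq_nonneg (y - z)]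
  simpa only [mul_sub] using! sq_sub_sub_le _ _ _

theorem inv_one_add_mul_weight {t : ℝ} (ht : 0 < t) (k : ℕ) (x : ℝ) :
    (1 + t)⁻¹ * ((1 + t) ^ (k + 1) * x) = (1 + t) ^ k * x := by
  rw [pow_succ']
  field_simp

theorem FiniteWeightedL2.integrableOn_weight_mul (hv : FiniteWeightedL2 (k + 1) v) :
    IntegrableOn (fun t => (1 + t) ^ k * v t) (Ioi 0) :=
  IntegrableOn.congr_fun (memLp_inv_one_add_Ioi.integrable_mul hv)
    (fun _ ht => inv_one_add_mul_weight ht k _) measurableSet_Ioi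

theorem FiniteWeightedL2.sq_integral_abs_weight_mul_le (hv : FiniteWeightedL2 (k + 1) v) :
    (∫ t in Ioi 0, |(1 + t) ^ k * v t|) ^ 2 ≤ weightedL2sq (k + 1) v := by
  have hsplit : EqOn (fun t => |(1 + t) ^ k * v t|)
      (fun t => (1 + t)⁻¹ * ‖(1 + t) ^ (k + 1) * v t‖) (Ioi 0) := fun t (ht : 0 < t) => by
    have hinv : 0 < (1 + t)⁻¹ := by positivity
    simp only [← inv_one_add_mul_weight ht k, abs_mul (1 + t)⁻¹, abs_of_pos hinv, Real.norm_eq_abs]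
  rw [setIntegral_congr_fun measurableSet_Ioi hsplit]
  simpa only [inv_pow, integral_inv_one_add_sq_Ioi, one_mul, Real.norm_eq_abs, sq_abs]
    using! sq_integral_mul_le memLp_inv_one_add_Ioi hv.norm

theorem integrableOn_of_weight_mul (hv : IntegrableOn (fun t => (1 + t) ^ k * v t) (Ioi 0)) :
    IntegrableOn v (Ioi 0) := by
  have hbound : ∀ t ∈ Ioi (0 : ℝ), ‖((1 + t) ^ k)⁻¹‖ ≤ 1 := fun t (ht : 0 < t) => by
    rw [Real.norm_of_nonneg (by positivity)]
    exact inv_le_one_of_one_le₀ (one_le_pow₀ (by linarith))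
  refine IntegrableOn.congr_fun (Integrable.bdd_mul hv (by fun_prop)
    (ae_restrict_of_forall_mem measurableSet_Ioi hbound)) (fun t (ht : 0 < t) => ?_)
    measurableSet_Ioi
  exact inv_mul_cancel_left₀ (by positivity) _

theorem abs_weight_mul_le_integral (hderiv : ∀ x > 0, HasDerivAt u (u' x) x)
    (hlim : Tendsto u atTop (nhds 0)) (hu' : IntegrableOn (fun t => (1 + t) ^ k * u' t) (Ioi 0))
    {x : ℝ} (hx : 0 < x) :
    |(1 + x) ^ k * u x| ≤ ∫ t in Ioi 0, |(1 + t) ^ k * u' t| := by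
  have hsub : Ioi x ⊆ Ioi 0 := Ioi_subset_Ioi hx.le
  have hu'x : IntegrableOn u' (Ioi x) := (integrableOn_of_weight_mul hu').mono_set hsub
  have hux : ∫ t in Ioi x, u' t = -u x := by
    simpa using integral_Ioi_of_hasDerivAt_of_tendsto'
      (fun t ht => hderiv t (hx.trans_le ht)) hu'x hlim
  calc |(1 + x) ^ k * u x| = |∫ t in Ioi x, (1 + x) ^ k * u' t| := by
        rw [integral_const_mul, hux, mul_neg, abs_neg]
    _ ≤ ∫ t in Ioi x, |(1 + x) ^ k * u' t| := abs_integral_le_integral_abs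
    _ ≤ ∫ t in Ioi x, |(1 + t) ^ k * u' t| := by
        refine setIntegral_mono_on (hu'x.const_mul _).abs (hu'.mono_set hsub).abs
          measurableSet_Ioi fun t (ht : x < t) => ?_
        have h1x : 0 < 1 + x := by positivity
        have h1t : 0 < 1 + t := by linarith
        rw [abs_mul, abs_mul, abs_of_pos (pow_pos h1x k), abs_of_pos (pow_pos h1t k)]
        gcongr
    _ ≤ ∫ t in Ioi 0, |(1 + t) ^ k * u' t| :=
        setIntegral_mono_set hu'.abs (.of_forall fun _ => abs_nonneg _) hsub.eventuallyLE

/-- The two powers of `⟨ψ⟩` pay for two uses of `⟨ψ⟩⁻¹ ∈ L²(ℝ₊)`: one in the Cauchy-Schwarz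
inequality for `u(ψ) = -∫_ψ^∞ u'`, one to integrate the resulting pointwise bound. The constant
is `1` because `⟨ψ⟩⁻¹` has norm `1`. -/
theorem weightedL2sq_le_of_hasDerivAt (hderiv : ∀ x > 0, HasDerivAt u (u' x) x)
    (hlim : Tendsto u atTop (nhds 0)) (hu' : FiniteWeightedL2 (k + 2) u') :
    FiniteWeightedL2 k u ∧ weightedL2sq k u ≤ weightedL2sq (k + 2) u' := by
  set N := weightedL2sq (k + 2) u'
  have hpointwise : ∀ x ∈ Ioi (0 : ℝ), ((1 + x) ^ k * u x) ^ 2 ≤ N * ((1 + x) ^ 2)⁻¹ := by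
    intro x (hx : 0 < x)
    rw [← inv_one_add_mul_weight hx, mul_pow, inv_pow, mul_comm, ← sq_abs]
    gcongr
    calc |(1 + x) ^ (k + 1) * u x| ^ 2 ≤ (∫ t in Ioi 0, |(1 + t) ^ (k + 1) * u' t|) ^ 2 := by
          gcongr
          exact abs_weight_mul_le_integral hderiv hlim hu'.integrableOn_weight_mul hx
      _ ≤ N := hu'.sq_integral_abs_weight_mul_le
  have hmajorant : IntegrableOn (fun x : ℝ => N * ((1 + x) ^ 2)⁻¹) (Ioi 0) :=
    integrableOn_inv_one_add_sq_Ioi.const_mul N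
  have hmeas : AEStronglyMeasurable (fun x => (1 + x) ^ k * u x) (volume.restrict (Ioi 0)) := by
    refine ContinuousOn.aestronglyMeasurable (fun x hx => ?_) measurableSet_Ioi
    have hux := (hderiv x hx).continuousAt
    exact ContinuousAt.continuousWithinAt (by fun_prop)
  have hsq : IntegrableOn (fun x => ((1 + x) ^ k * u x) ^ 2) (Ioi 0) := by
    refine hmajorant.mono' (hmeas.pow 2) (ae_restrict_of_forall_mem measurableSet_Ioi ?_)
    simpa only [Real.norm_of_nonneg (sq_nonneg _)] using hpointwise
  refine ⟨(memLp_two_iff_integrable_sq hmeas).2 hsq, ?_⟩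
  calc weightedL2sq k u ≤ ∫ x in Ioi (0 : ℝ), N * ((1 + x) ^ 2)⁻¹ :=
        setIntegral_mono_on hsq hmajorant measurableSet_Ioi hpointwise
    _ = N := by rw [integral_const_mul, integral_inv_one_add_sq_Ioi, mul_one]

theorem weightedL2sq_le_of_hasDerivAt_hasDerivAt (hu : ∀ x > 0, HasDerivAt u (u' x) x)
    (hu' : ∀ x > 0, HasDerivAt u' (u'' x) x) (hlim : Tendsto u atTop (nhds 0))
    (hu'' : FiniteWeightedL2 (k + 4) u'') :
    FiniteWeightedL2 k u ∧ weightedL2sq k u ≤ weightedL2sq (k + 4) u'' := by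
  have hlim' := tendsto_limUnder_of_hasDerivAt_of_integrableOn_Ioi hu'
    (integrableOn_of_weight_mul hu''.integrableOn_weight_mul)
  rw [eq_zero_of_tendsto_of_tendsto_deriv hu hlim hlim'] at hlim'
  obtain ⟨hfin', hle'⟩ := weightedL2sq_le_of_hasDerivAt hu' hlim' hu''
  obtain ⟨hfin, hle⟩ := weightedL2sq_le_of_hasDerivAt hu hlim hfin'
  exact ⟨hfin, hle.trans hle'⟩

end WeightedHalfLine

section TangentialIntegral

variable {L : ℝ} {a b : ℝ → ℝ} {Q F G h : ℝ → ℝ → ℝ}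

theorem L2sq_nonneg (L : ℝ) (h : ℝ → ℝ → ℝ) : 0 ≤ L2sq L h :=
  integral_nonneg fun _ => sq_nonneg _

theorem continuous_intervalIntegral_mul (L : ℝ) (hb : Continuous b)
    (hh : Continuous (uncurry h)) :
    Continuous fun ψ => ∫ s in (0 : ℝ)..L, b s * h s ψ :=
  intervalIntegral.continuous_parametric_intervalIntegral_of_continuous'
    (f := fun ψ s => b s * h s ψ) (by fun_prop) 0 L

theorem continuous_zeroMode (L : ℝ) (hh : Continuous (uncurry h)) :
    Continuous (zeroMode L h) := by
  have hcont : Continuous fun ψ => ∫ s in (0 : ℝ)..L, h s ψ := by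
    simpa using continuous_intervalIntegral_mul L continuous_one hh
  exact hcont.const_mul (1 / L)

theorem sq_weight_mul_integral_le (hL : 0 ≤ L) (hb : Continuous b) (hh : Continuous (uncurry h))
    (k : ℕ) (ψ : ℝ) :
    ((1 + ψ) ^ k * ∫ s in (0 : ℝ)..L, b s * h s ψ) ^ 2
      ≤ (∫ s in (0 : ℝ)..L, b s ^ 2) * ∫ s in Ioc 0 L, wt k h s ψ ^ 2 := by
  have memLp {f : ℝ → ℝ} (hf : Continuous f) : MemLp f 2 (volume.restrict (Ioc 0 L)) :=
    (memLp_two_iff_integrable_sq hf.aestronglyMeasurable).2 ((hf.pow 2).integrableOn_Ioc)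
  have hwt : Continuous fun s => wt k h s ψ := by unfold wt; fun_prop
  have hmul : (1 + ψ) ^ k * ∫ s in Ioc 0 L, b s * h s ψ = ∫ s in Ioc 0 L, b s * wt k h s ψ := by
    simp only [wt, ← integral_const_mul, mul_left_comm]
  simp only [intervalIntegral.integral_of_le hL, hmul]
  exact sq_integral_mul_le (memLp hb) (memLp hwt)

theorem weightedL2sq_integral_mul_le (hL : 0 ≤ L) (hb : Continuous b)
    (hh : Continuous (uncurry h)) {k : ℕ} (hfin : FiniteL2 L (wt k h)) :
    FiniteWeightedL2 k (fun ψ => ∫ s in (0 : ℝ)..L, b s * h s ψ) ∧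
      weightedL2sq k (fun ψ => ∫ s in (0 : ℝ)..L, b s * h s ψ)
        ≤ (∫ s in (0 : ℝ)..L, b s ^ 2) * L2sq L (wt k h) := by
  have hpointwise := sq_weight_mul_integral_le hL hb hh k
  have hmeas : AEStronglyMeasurable (fun ψ => (1 + ψ) ^ k * ∫ s in (0 : ℝ)..L, b s * h s ψ)
      (volume.restrict (Ioi 0)) :=
    (Continuous.mul (by fun_prop) (continuous_intervalIntegral_mul L hb hh)).aestronglyMeasurable
  have hprod : Integrable (fun p : ℝ × ℝ => wt k h p.1 p.2 ^ 2)
      ((volume.restrict (Ioc 0 L)).prod (volume.restrict (Ioi 0))) := by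
    rw [Measure.prod_restrict]
    exact hfin
  have hmajorant := hprod.integral_prod_right.const_mul (∫ s in (0 : ℝ)..L, b s ^ 2)
  have hsq : IntegrableOn (fun ψ => ((1 + ψ) ^ k * ∫ s in (0 : ℝ)..L, b s * h s ψ) ^ 2)
      (Ioi 0) := by
    refine hmajorant.mono' (hmeas.pow 2) (.of_forall fun ψ => ?_)
    rw [Real.norm_of_nonneg (sq_nonneg _)]
    exact hpointwise ψ
  refine ⟨(memLp_two_iff_integrable_sq hmeas).2 hsq, ?_⟩
  calc weightedL2sq k (fun ψ => ∫ s in (0 : ℝ)..L, b s * h s ψ)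
      ≤ ∫ ψ in Ioi 0, (∫ s in (0 : ℝ)..L, b s ^ 2) * ∫ s in Ioc 0 L, wt k h s ψ ^ 2 :=
        integral_mono hsq hmajorant hpointwise
    _ = (∫ s in (0 : ℝ)..L, b s ^ 2) * L2sq L (wt k h) := by
        rw [integral_const_mul, ← integral_prod_symm _ hprod, Measure.prod_restrict]
        rfl

theorem weightedL2sq_integral_le (hL : 0 ≤ L) (hh : Continuous (uncurry h)) {k : ℕ}
    (hfin : FiniteL2 L (wt k h)) :
    FiniteWeightedL2 k (fun ψ => ∫ s in (0 : ℝ)..L, h s ψ) ∧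
      weightedL2sq k (fun ψ => ∫ s in (0 : ℝ)..L, h s ψ) ≤ L * L2sq L (wt k h) := by
  simpa using weightedL2sq_integral_mul_le hL continuous_one hh hfin

theorem dPsi_zero (h : ℝ → ℝ → ℝ) : dPsi 0 h = h := by
  ext s ψ
  simp [dPsi]

theorem contDiff_dPsi {n : WithTop ℕ∞} {j : ℕ} (hh : ContDiff ℝ (n + j) (uncurry h)) :
    ContDiff ℝ n (uncurry (dPsi j h)) := by
  induction j generalizing n with
  | zero => simpa [dPsi_zero] using hh
  | succ j ih =>
    have hj : ContDiff ℝ (n + 1) (uncurry (dPsi j h)) :=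
      ih (by simpa [add_assoc, add_comm (1 : WithTop ℕ∞)] using hh)
    have hderiv : uncurry (dPsi (j + 1) h) = fun p => fderiv ℝ (dPsi j h p.1) p.2 1 := by
      ext p
      simp only [uncurry, dPsi, iteratedDeriv_succ, fderiv_apply_one_eq_deriv]
      rfl
    rw [hderiv]
    exact ContDiff.fderiv_apply (f := fun p : ℝ × ℝ => dPsi j h p.1)
      (hj.comp (by fun_prop : ContDiff ℝ (n + 1) fun p : (ℝ × ℝ) × ℝ => (p.1.1, p.2)))
      contDiff_snd contDiff_const le_rfl

theorem hasDerivAt_dPsi {j : ℕ} (hh : ContDiff ℝ (j + 1) (uncurry h)) (s ψ : ℝ) :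
    HasDerivAt (dPsi j h s) (dPsi (j + 1) h s ψ) ψ := by
  have hslice : ContDiff ℝ (j + 1) (h s) := hh.comp (contDiff_prodMk_right s)
  simp only [dPsi, iteratedDeriv_succ]
  exact (hslice.differentiable_iteratedDeriv' j ψ).hasDerivAt

theorem hasDerivAt_fluxIntegral (L : ℝ) (ha : Continuous a) {j : ℕ}
    (hQ : ContDiff ℝ (j + 1) (uncurry Q)) (hG : ContDiff ℝ (j + 1) (uncurry G)) (ψ : ℝ) :
    HasDerivAt (fluxIntegral L a Q G j) (fluxIntegral L a Q G (j + 1) ψ) ψ := by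
  have continuous_dPsi {h : ℝ → ℝ → ℝ} (hh : ContDiff ℝ (j + 1) (uncurry h)) :
      Continuous (uncurry (dPsi j h)) ∧ Continuous (uncurry (dPsi (j + 1) h)) :=
    ⟨(contDiff_dPsi (n := 1) (by rwa [add_comm])).continuous,
      (contDiff_dPsi (n := 0) (by simpa using hh)).continuous⟩
  obtain ⟨hQj, hQj'⟩ := continuous_dPsi hQ
  obtain ⟨hGj, hGj'⟩ := continuous_dPsi hG
  refine hasDerivAt_intervalIntegral_of_continuous 0 L ψ (fun ψ => by fun_prop)
    (h' := fun s ψ => a s * dPsi (j + 1) Q s ψ + dPsi (j + 1) G s ψ) ?_ fun s ψ => ?_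
  · fun_prop
  · exact ((hasDerivAt_dPsi hQ s ψ).const_mul (a s)).add (hasDerivAt_dPsi hG s ψ)

theorem fluxIntegral_zero (L : ℝ) (ha : Continuous a) (hQ : Continuous (uncurry Q))
    (hG : Continuous (uncurry G)) (ψ : ℝ) :
    fluxIntegral L a Q G 0 ψ
      = (∫ s in (0 : ℝ)..L, a s * Q s ψ) + ∫ s in (0 : ℝ)..L, G s ψ := by
  simp only [fluxIntegral, dPsi_zero]
  exact intervalIntegral.integral_add (Continuous.intervalIntegrable (by fun_prop) 0 L)
    (Continuous.intervalIntegrable (by fun_prop) 0 L)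

theorem integral_dS_one_eq_zero {ψ : ℝ} (hh : ContDiff ℝ 1 fun s => h s ψ)
    (hper : Periodic (fun s => h s ψ) L) : ∫ s in (0 : ℝ)..L, dS 1 h s ψ = 0 := by
  simp only [dS, iteratedDeriv_one]
  rw [intervalIntegral.integral_deriv_eq_sub (fun s _ => hh.differentiable one_ne_zero s)
    (hh.continuous_deriv_one.intervalIntegrable 0 L), hper.eq, sub_self]

theorem fluxIntegral_two_eq_neg {ψ : ℝ} (hQ : ContDiff ℝ 1 (uncurry Q)) (hper : PeriodicS L Q)
    (hF : Continuous (uncurry F))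
    (heq : ∀ s, dS 1 Q s ψ - a s * dPsi 2 Q s ψ = F s ψ + dPsi 2 G s ψ) :
    fluxIntegral L a Q G 2 ψ = -∫ s in (0 : ℝ)..L, F s ψ := by
  have hQψ : ContDiff ℝ 1 fun s => Q s ψ := hQ.comp (contDiff_prodMk_left ψ)
  have hdS : Continuous fun s => dS 1 Q s ψ := by
    simpa only [dS, iteratedDeriv_one] using hQψ.continuous_deriv_one
  have hflux : ∀ s, a s * dPsi 2 Q s ψ + dPsi 2 G s ψ = dS 1 Q s ψ - F s ψ := fun s => by
    linarith [heq s]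
  simp only [fluxIntegral, hflux]
  rw [intervalIntegral.integral_sub (hdS.intervalIntegrable 0 L)
    (Continuous.intervalIntegrable (by fun_prop) 0 L),
    integral_dS_one_eq_zero hQψ (hper ψ), zero_sub]

theorem weightedL2sq_fluxIntegral_le (hL : 0 ≤ L) (ha : Continuous a)
    (hQ : ContDiff ℝ 2 (uncurry Q)) (hper : PeriodicS L Q) (hF : Continuous (uncurry F))
    (hG : ContDiff ℝ 2 (uncurry G))
    (heq : ∀ s, ∀ ψ > 0, dS 1 Q s ψ - a s * dPsi 2 Q s ψ = F s ψ + dPsi 2 G s ψ)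
    (hlim : Tendsto (fluxIntegral L a Q G 0) atTop (nhds 0)) {k : ℕ}
    (hfin : FiniteL2 L (wt (k + 4) F)) :
    FiniteWeightedL2 k (fluxIntegral L a Q G 0) ∧
      weightedL2sq k (fluxIntegral L a Q G 0) ≤ L * L2sq L (wt (k + 4) F) := by
  obtain ⟨hfinF, hleF⟩ := weightedL2sq_integral_le hL hF hfin
  have hderiv : ∀ ψ > 0, HasDerivAt (fluxIntegral L a Q G 0) (fluxIntegral L a Q G 1 ψ) ψ :=
    fun ψ _ => hasDerivAt_fluxIntegral L ha (hQ.of_le (by norm_num)) (hG.of_le (by norm_num)) ψ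
  have hderiv' : ∀ ψ > 0,
      HasDerivAt (fluxIntegral L a Q G 1) (-∫ s in (0 : ℝ)..L, F s ψ) ψ := fun ψ hψ => by
    rw [← fluxIntegral_two_eq_neg (hQ.of_le one_le_two) hper hF (heq · ψ hψ)]
    exact hasDerivAt_fluxIntegral L ha (hQ.of_le (by norm_num)) (hG.of_le (by norm_num)) ψ
  obtain ⟨hfinH, hleH⟩ :=
    weightedL2sq_le_of_hasDerivAt_hasDerivAt hderiv hderiv' hlim hfinF.neg
  rw [weightedL2sq_neg] at hleH
  exact ⟨hfinH, hleH.trans hleF⟩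

theorem integral_mul_zeroMode_eq (ha : Continuous a) (hQ : Continuous (uncurry Q))
    (hG : Continuous (uncurry G)) (ψ : ℝ) :
    (∫ s in (0 : ℝ)..L, a s) * zeroMode L Q ψ
      = fluxIntegral L a Q G 0 ψ - (∫ s in (0 : ℝ)..L, G s ψ)
        - ∫ s in (0 : ℝ)..L, a s * (Q s ψ - zeroMode L Q ψ) := by
  simp only [fluxIntegral_zero L ha hQ hG, mul_sub]
  rw [intervalIntegral.integral_sub (Continuous.intervalIntegrable (by fun_prop) 0 L)
    (Continuous.intervalIntegrable (by fun_prop) 0 L), intervalIntegral.integral_mul_const]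
  ring

end TangentialIntegral

theorem linear_prandtl_zero_mode_estimate_general {L : ℝ} (hL : 0 < L) {a : ℝ → ℝ}
    (ha : Continuous a) (ha0 : (∫ s in (0 : ℝ)..L, a s) ≠ 0) {Q F G : ℝ → ℝ → ℝ}
    (hQ : ContDiff ℝ 2 (uncurry Q)) (hper : PeriodicS L Q) (hF : Continuous (uncurry F))
    (hG : ContDiff ℝ 2 (uncurry G))
    (heq : ∀ s, ∀ ψ > 0, dS 1 Q s ψ - a s * dPsi 2 Q s ψ = F s ψ + dPsi 2 G s ψ)
    (hQlim : Tendsto (fun ψ => ∫ s in (0 : ℝ)..L, a s * Q s ψ) atTop (nhds 0))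
    (hGlim : Tendsto (fun ψ => ∫ s in (0 : ℝ)..L, G s ψ) atTop (nhds 0)) {m : ℕ}
    (hfinQ : FiniteL2 L (wt m fun s ψ => Q s ψ - zeroMode L Q ψ))
    (hfinF : FiniteL2 L (wt (m + 4) F)) (hfinG : FiniteL2 L (wt m G)) :
    FiniteWeightedL2 m (zeroMode L Q) ∧
      weightedL2sq m (zeroMode L Q)
        ≤ 3 * (L + ∫ s in (0 : ℝ)..L, a s ^ 2) / (∫ s in (0 : ℝ)..L, a s) ^ 2 *
          (L2sq L (wt m fun s ψ => Q s ψ - zeroMode L Q ψ)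
            + L2sq L (wt (m + 4) F) + L2sq L (wt m G)) := by
  have hnonzero : Continuous (uncurry fun s ψ => Q s ψ - zeroMode L Q ψ) :=
    hQ.continuous.sub ((continuous_zeroMode L hQ.continuous).comp continuous_snd)
  have hflux : Tendsto (fluxIntegral L a Q G 0) atTop (nhds 0) := by
    simpa only [funext (fluxIntegral_zero L ha hQ.continuous hG.continuous), add_zero]
      using hQlim.add hGlim
  obtain ⟨hfinH, hleH⟩ :=
    weightedL2sq_fluxIntegral_le hL.le ha hQ hper hF hG heq hflux hfinF
  obtain ⟨hfing, hleg⟩ := weightedL2sq_integral_le hL.le hG.continuous hfinG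
  obtain ⟨hfinr, hler⟩ := weightedL2sq_integral_mul_le hL.le ha hnonzero hfinQ
  have hfinZ := (hfinH.sub hfing).sub hfinr
  have hleZ := weightedL2sq_sub_sub_le hfinH hfing hfinr
  simp only [← integral_mul_zeroMode_eq ha hQ.continuous hG.continuous] at hfinZ hleZ
  rw [weightedL2sq_const_mul] at hleZ
  refine ⟨by simpa only [inv_mul_cancel_left₀ ha0] using hfinZ.const_mul (∫ s in 0..L, a s)⁻¹, ?_⟩
  rw [div_mul_eq_mul_div, le_div_iff₀' (by positivity)]
  set A := ∫ s in (0 : ℝ)..L, a s ^ 2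
  set NQ := L2sq L (wt m fun s ψ => Q s ψ - zeroMode L Q ψ)
  set NF := L2sq L (wt (m + 4) F)
  set NG := L2sq L (wt m G)
  have hA : 0 ≤ A := intervalIntegral.integral_nonneg hL.le fun s _ => sq_nonneg _
  calc (∫ s in (0 : ℝ)..L, a s) ^ 2 * weightedL2sq m (zeroMode L Q)
      ≤ 3 * (L * NF + L * NG + A * NQ) := by linarith
    _ ≤ 3 * ((L + A) * NF + (L + A) * NG + (L + A) * NQ) := by
        gcongr <;> first | exact L2sq_nonneg _ _ | linarith
    _ = 3 * (L + A) * (NQ + NF + NG) := by ring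

/-- **The zero-mode estimate for the linear Prandtl problem.** -/
theorem linear_prandtl_zero_mode_estimate
    (L : ℝ) (hL : 0 < L)
    (q_e : ℝ → ℝ) (hqe : ContDiff ℝ (⊤ : ℕ∞) q_e) (hqeper : Function.Periodic q_e L)
    (hqepos : ∀ s, 0 < q_e s)
    (ω₀ : ℝ) (hω₀ : 0 < ω₀) (m : ℕ) :
    ∃ C > (0:ℝ), ∀ Q F G : ℝ → ℝ → ℝ,
      Smooth2 Q → PeriodicS L Q → Smooth2 F → PeriodicS L F →
      Smooth2 G → PeriodicS L G →
      (∀ s : ℝ, ∀ ψ > (0:ℝ),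
        dS 1 Q s ψ - ω₀ * q_e s * dPsi 2 Q s ψ = F s ψ + dPsi 2 G s ψ) →
      (∀ s : ℝ, Tendsto (fun ψ => Q s ψ) atTop (nhds 0)) →
      -- decay conditions
      Tendsto (fun ψ => ∫ s in (0:ℝ)..L, q_e s * Q s ψ) atTop (nhds 0) →
      Tendsto (fun ψ => deriv (fun ψ' => ∫ s in (0:ℝ)..L, q_e s * Q s ψ') ψ)
        atTop (nhds 0) →
      Tendsto (fun ψ => ∫ s in (0:ℝ)..L, G s ψ) atTop (nhds 0) →
      -- finiteness of the right-hand side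
      FiniteL2 L (wt m (fun s ψ => Q s ψ - (1/L) * ∫ s' in (0:ℝ)..L, Q s' ψ)) →
      FiniteL2 L (wt (m+4) F) → FiniteL2 L (wt m G) →
      (∫ ψ in Ioi (0:ℝ), ((1+ψ)^m * ((1/L) * ∫ s in (0:ℝ)..L, Q s ψ)) ^ 2)
        ≤ C * (L2sq L (wt m (fun s ψ => Q s ψ - (1/L) * ∫ s' in (0:ℝ)..L, Q s' ψ))
            + L2sq L (wt (m+4) F) + L2sq L (wt m G)) := by
  have ha : Continuous fun s => ω₀ * q_e s := by fun_prop
  have hmean : 0 < ∫ s in (0 : ℝ)..L, ω₀ * q_e s :=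
    intervalIntegral.intervalIntegral_pos_of_pos (ha.intervalIntegrable 0 L)
      (fun s => mul_pos hω₀ (hqepos s)) hL
  have hsq : 0 ≤ ∫ s in (0 : ℝ)..L, (ω₀ * q_e s) ^ 2 :=
    intervalIntegral.integral_nonneg hL.le fun s _ => sq_nonneg _
  have hsmooth {h : ℝ → ℝ → ℝ} (hh : Smooth2 h) : ContDiff ℝ 2 (uncurry h) :=
    mod_cast contDiff_infty.1 hh 2
  refine ⟨3 * (L + ∫ s in (0 : ℝ)..L, (ω₀ * q_e s) ^ 2) / (∫ s in (0 : ℝ)..L, ω₀ * q_e s) ^ 2,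
    by positivity, fun Q F G hQ hper hF _ hG _ heq _ hQlim _ hGlim hfinQ hfinF hfinG => ?_⟩
  have hfluxlim : Tendsto (fun ψ => ∫ s in (0 : ℝ)..L, ω₀ * q_e s * Q s ψ) atTop (nhds 0) := by
    simpa [mul_assoc] using hQlim.const_mul ω₀
  exact (linear_prandtl_zero_mode_estimate_general hL ha hmean.ne' (hsmooth hQ) hper hF.continuous
    (hsmooth hG) heq hfluxlim hGlim hfinQ hfinF hfinG).2
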